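/- Let X be a set and fix a real number α with 1 < α < 2. Define a map Φ from the complete lattice of equivalence relations (setoids) on X, ordered by implication of relations, to weight structures on X by: Φ(∼)(a,b) = 0 if a = b; Φ(∼)(a,b) = α if a ≠ b and a ∼ b; and Φ(∼)(a,b) = 1 otherwise. Then: (i) each Φ(∼) satisfies axioms (0), (s), (Σ) and (Δ); (ii) for each ∼, the topology ψ(Φ(∼)) is the discrete topology on X; (iii) Φ is injective and order-preserving; and (iv) Φ carries infima to pointwise infima: for every nonempty family {∼_i} of equivalence relations, Φ(⨅_i ∼_i) equals the pointwise infimum ⨅_i Φ(∼_i). In particular, the lattice of equivalence relations on X embeds, preserving arbitrary nonempty meets, into the fiber of ψ over the discrete topology. -/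

import Mathlib

open scoped ENNReal

/-- Axiom (0). -/
def Ax0 {X : Type*} (d : X × X → ℝ≥0∞) : Prop := ∀ x : X, d (x, x) = 0

/-- Axiom (s). -/
def AxSep {X : Type*} (d : X × X → ℝ≥0∞) : Prop :=
  ∀ x y : X, d (x, y) = 0 → d (y, x) = 0 → x = y

/-- Axiom (Σ). -/
def AxSym {X : Type*} (d : X × X → ℝ≥0∞) : Prop := ∀ x y : X, d (x, y) = d (y, x)

/-- Axiom (Δ). -/
def AxTri {X : Type*} (d : X × X → ℝ≥0∞) : Prop :=
  ∀ x y z : X, d (x, z) ≤ d (x, y) + d (y, z)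

/-- `ψ(d)`: the topology generated by the balls of `d` as a subbasis. -/
def psi {X : Type*} (d : X × X → ℝ≥0∞) : TopologicalSpace X :=
  TopologicalSpace.generateFrom
    {s : Set X | ∃ (x : X) (ε : ℝ≥0∞), 0 < ε ∧ s = {y : X | d (x, y) < ε}}

-- `Φ(∼)(a,b) = 0` if `a = b`, `= α` if `a ≠ b` and `a ∼ b`, and `= 1` otherwise.
open Classical in
noncomputable def Phi {X : Type*} (α : ℝ) (r : Setoid X) : X × X → ℝ≥0∞ :=
  fun p => if p.1 = p.2 then 0 else if r.r p.1 p.2 then ENNReal.ofReal α else 1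

/-!
Off the diagonal `Φ(∼)` takes values in `[1, α] ⊆ [1, 2]`. The lower bound makes every ball of
radius `1` a singleton, and two off-diagonal values always add up to at least `2`, hence to at
least any third value. Since `1 < α`, off the diagonal `a ∼ b` means exactly `1 < Φ(∼)(a, b)`, so
the order of equivalence relations can be read off `Φ`. An infimum of values in `{1, α}` equals `1`
as soon as one of them does, just as `⨅ i, ∼ᵢ` fails at `(a, b)` as soon as one `∼ᵢ` does.
-/

section WeightStructure

open scoped Topology

variable {X : Type*} {d : X × X → ℝ≥0∞}

lemma axSep_of_pos (hd : ∀ x y, x ≠ y → 0 < d (x, y)) : AxSep d := fun x y hxy _ =>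
  by_contra fun hne => (hd x y hne).ne' hxy

lemma axTri_of_le_of_le_add {c : ℝ≥0∞} (h0 : Ax0 d) (hc : ∀ x y, x ≠ y → c ≤ d (x, y))
    (hcc : ∀ x y, d (x, y) ≤ c + c) : AxTri d := fun x y z => by
  rcases eq_or_ne x y with rfl | hxy
  · rw [h0, zero_add]
  rcases eq_or_ne y z with rfl | hyz
  · rw [h0, add_zero]
  exact (hcc x z).trans (add_le_add (hc x y hxy) (hc y z hyz))

lemma isOpen_psi_ball (d : X × X → ℝ≥0∞) (x : X) {ε : ℝ≥0∞} (hε : 0 < ε) :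
    IsOpen[psi d] {y | d (x, y) < ε} :=
  TopologicalSpace.isOpen_generateFrom_of_mem ⟨x, ε, hε, rfl⟩

lemma psi_eq_bot_of_forall_exists_le (h0 : Ax0 d)
    (hd : ∀ x, ∃ ε > 0, ∀ y, x ≠ y → ε ≤ d (x, y)) : psi d = ⊥ := by
  refine eq_bot_of_singletons_open fun x => ?_
  obtain ⟨ε, hε, hle⟩ := hd x
  have ball_eq : {y | d (x, y) < ε} = {x} := by
    ext y
    refine ⟨fun hy => by_contra fun hyx => (hle y (Ne.symm hyx)).not_gt hy, ?_⟩
    rintro rfl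
    exact (h0 y).trans_lt hε
  exact ball_eq ▸ isOpen_psi_ball d x hε

end WeightStructure

section Phi

variable {X : Type*} {α : ℝ} {r s : Setoid X} {a b : X}

lemma Phi_self (r : Setoid X) (a : X) : Phi α r (a, a) = 0 := if_pos rfl

lemma Phi_of_rel (hab : a ≠ b) (h : r a b) : Phi α r (a, b) = ENNReal.ofReal α :=
  (if_neg hab).trans (if_pos h)

lemma Phi_of_not_rel (h : ¬ r a b) : Phi α r (a, b) = 1 :=
  (if_neg fun hab : a = b => h (hab ▸ r.refl a)).trans (if_neg h)

lemma one_le_Phi (hα : 1 ≤ α) (r : Setoid X) (hab : a ≠ b) : 1 ≤ Phi α r (a, b) := by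
  by_cases h : r a b
  · rw [Phi_of_rel hab h]
    exact ENNReal.one_le_ofReal.2 hα
  · exact (Phi_of_not_rel h).ge

lemma Phi_le_ofReal (hα : 1 ≤ α) (r : Setoid X) (a b : X) :
    Phi α r (a, b) ≤ ENNReal.ofReal α := by
  rcases eq_or_ne a b with rfl | hab
  · exact (Phi_self r a).trans_le zero_le
  by_cases h : r a b
  · exact (Phi_of_rel hab h).le
  · exact (Phi_of_not_rel h).trans_le (ENNReal.one_le_ofReal.2 hα)

lemma one_lt_Phi_iff (hα : 1 < α) (hab : a ≠ b) : 1 < Phi α r (a, b) ↔ r a b := by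
  refine ⟨fun hlt => by_contra fun h => hlt.ne' (Phi_of_not_rel h), fun h => ?_⟩
  rw [Phi_of_rel hab h]
  exact ENNReal.one_lt_ofReal.2 hα

lemma axSym_Phi (α : ℝ) (r : Setoid X) : AxSym (Phi α r) := fun x y => by
  rcases eq_or_ne x y with rfl | hxy
  · rfl
  by_cases h : r x y
  · rw [Phi_of_rel hxy h, Phi_of_rel hxy.symm (r.symm h)]
  · rw [Phi_of_not_rel h, Phi_of_not_rel (mt r.symm h)]

lemma axTri_Phi (h1 : 1 ≤ α) (h2 : α ≤ 2) (r : Setoid X) : AxTri (Phi α r) :=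
  axTri_of_le_of_le_add (Phi_self r) (fun _ _ => one_le_Phi h1 r) fun x y =>
    calc Phi α r (x, y) ≤ ENNReal.ofReal α := Phi_le_ofReal h1 r x y
      _ ≤ 2 := ENNReal.ofReal_le_ofNat.2 h2
      _ = 1 + 1 := one_add_one_eq_two.symm

lemma psi_Phi (hα : 1 ≤ α) (r : Setoid X) : psi (Phi α r) = ⊥ :=
  psi_eq_bot_of_forall_exists_le (Phi_self r) fun _ =>
    ⟨1, one_pos, fun _ => one_le_Phi hα r⟩

lemma Phi_mono (hα : 1 ≤ α) : Monotone (Phi (X := X) α) := by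
  rintro r s hrs ⟨a, b⟩
  rcases eq_or_ne a b with rfl | hab
  · rw [Phi_self, Phi_self]
  by_cases hr : r a b
  · rw [Phi_of_rel hab hr, Phi_of_rel hab (hrs hr)]
  · exact (Phi_of_not_rel hr).trans_le (one_le_Phi hα s hab)

lemma Phi_le_Phi_iff (hα : 1 < α) : Phi α r ≤ Phi α s ↔ r ≤ s := by
  refine ⟨fun hle a b hr => ?_, fun hrs => Phi_mono hα.le hrs⟩
  rcases eq_or_ne a b with rfl | hab
  · exact s.refl a
  · exact (one_lt_Phi_iff hα hab).1 (((one_lt_Phi_iff hα hab).2 hr).trans_le (hle (a, b)))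

lemma Phi_iInf (hα : 1 ≤ α) {ι : Sort*} [Nonempty ι] (S : ι → Setoid X) :
    Phi α (⨅ i, S i) = ⨅ i, Phi α (S i) := by
  refine le_antisymm (Phi_mono hα).map_iInf_le ?_
  rintro ⟨a, b⟩
  rw [iInf_apply]
  rcases eq_or_ne a b with rfl | hab
  · simp only [Phi_self, ciInf_const, le_refl]
  by_cases h : ∀ i, S i a b
  · have hinf : (⨅ i, S i) a b := Set.forall_mem_range.2 h
    rw [Phi_of_rel hab hinf]
    exact iInf_le_of_le (Classical.arbitrary ι) (Phi_le_ofReal hα _ a b)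
  · obtain ⟨i, hi⟩ := not_forall.1 h
    calc ⨅ i, Phi α (S i) (a, b) ≤ Phi α (S i) (a, b) := iInf_le _ i
      _ = 1 := Phi_of_not_rel hi
      _ ≤ Phi α (⨅ i, S i) (a, b) := one_le_Phi hα _ hab

end Phi

theorem stmt19_general {X : Type*} {α : ℝ} (h1 : 1 < α) (h2 : α ≤ 2) :
    (∀ r : Setoid X, Ax0 (Phi α r) ∧ AxSep (Phi α r) ∧ AxSym (Phi α r) ∧ AxTri (Phi α r)) ∧
    (∀ r : Setoid X, psi (Phi α r) = ⊥) ∧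
    (∀ r s : Setoid X, Phi α r ≤ Phi α s ↔ r ≤ s) ∧
    (∀ (ι : Sort*) (_ : Nonempty ι) (S : ι → Setoid X),
      Phi α (⨅ i, S i) = ⨅ i, Phi α (S i)) := by
  refine ⟨fun r => ⟨Phi_self r, ?sep, axSym_Phi α r, axTri_Phi h1.le h2 r⟩, psi_Phi h1.le,
    fun _ _ => Phi_le_Phi_iff h1, fun _ _ => Phi_iInf h1.le⟩
  case sep => exact axSep_of_pos fun _ _ hxy => one_pos.trans_le (one_le_Phi h1.le r hxy)

/-- For `1 < α < 2`, the map `Φ` from equivalence relations on `X` to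
weight structures satisfies: (i) each `Φ(∼)` is an extended metric (axioms (0), (s),
(Σ), (Δ)); (ii) each `ψ(Φ(∼))` is the discrete topology (Mathlib's `⊥`); (iii) `Φ` is
injective and order-preserving; (iv) `Φ` carries infima of nonempty families to
pointwise infima.  In particular the lattice of equivalence relations embeds, preserving
arbitrary nonempty meets, into the fiber of `ψ` over the discrete topology. -/
theorem stmt19 (X : Type*) (α : ℝ) (h1 : 1 < α) (h2 : α < 2) :
    (∀ r : Setoid X, Ax0 (Phi α r) ∧ AxSep (Phi α r) ∧ AxSym (Phi α r) ∧ AxTri (Phi α r)) ∧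
    (∀ r : Setoid X, psi (Phi α r) = ⊥) ∧
    Function.Injective (Phi (X := X) α) ∧
    Monotone (Phi (X := X) α) ∧
    (∀ (ι : Type) (_ : Nonempty ι) (S : ι → Setoid X),
      Phi α (⨅ i, S i) = ⨅ i, Phi α (S i)) := by
  obtain ⟨metric, discrete, le_iff, map_iInf⟩ := stmt19_general (X := X) h1 h2.le
  exact ⟨metric, discrete, (OrderEmbedding.ofMapLEIff _ le_iff).injective,
    fun r s => (le_iff r s).2, map_iInf⟩
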